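/- Let X_n be a sequence of non-negative integer random variables whose probability generating functions satisfy E[x^{X_n}] = c(x)·z₀(1)^n/z₀(x)^n·(1 + o(1)) uniformly for x in a complex neighborhood of 1, where z₀(x) is analytic and nonzero near 1, c is analytic and nonzero near 1, and z₀'(1) ≠ 0. Then (X_n − μn)/√n converges in distribution to N(0, σ²), where μ = −z₀'(1)/z₀(1) and σ² = μ + μ² − z₀''(1)/z₀(1); moreover E X_n = μn + O(1) and Var X_n = σ²n + O(1). -/

import Mathlib

open Filter Topology MeasureTheory ProbabilityTheory Asymptotics

/-!
Near `s = 0` write the Laplace transform of `X i` as `G i s * exp (β i * u s)`. The quasi-power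
asymptotics say that `G i s → 1` as `i → l` and `s → 0` jointly, so `G i` is holomorphic and
bounded on a fixed disc and its derivatives at `0` are `O(1)` by Cauchy's estimates. The mean and
the variance are the first two logarithmic derivatives of the Laplace transform at `0`, namely
`β i * u'(0) + O(1)` and `β i * u''(0) + O(1)`. At `s = t * I / √(β i)` the factor `G i s` tends
to `1`, and the second order Taylor expansion of `u` yields the Gaussian characteristic function;
Lévy's continuity theorem concludes.
-/

section Analytic

lemma isBigO_one_iteratedDeriv_of_isBigO_one {ι F : Type*} [NormedAddCommGroup F]
    [NormedSpace ℂ F] [CompleteSpace F] {l : Filter ι} {f : ι → ℂ → F} {a : ℂ}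
    (hd : ∀ᶠ p in l ×ˢ 𝓝 a, DifferentiableAt ℂ (f p.1) p.2)
    (hb : (fun p : ι × ℂ ↦ f p.1 p.2) =O[l ×ˢ 𝓝 a] (1 : ι × ℂ → ℝ)) (m : ℕ) :
    (fun i ↦ iteratedDeriv m (f i) a) =O[l] (1 : ι → ℝ) := by
  obtain ⟨C, hC⟩ := hb.bound
  obtain ⟨good, hgood, ε, hε, hball⟩ := Metric.eventually_prod_nhds_iff.1 (hd.and hC)
  refine .of_bound (m.factorial * C / (ε / 2) ^ m) (hgood.mono fun i hi ↦ ?_)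
  have hsub : Metric.closedBall a (ε / 2) ⊆ Metric.ball a ε :=
    Metric.closedBall_subset_ball (half_lt_self hε)
  have hdiff : DifferentiableOn ℂ (f i) (Metric.closedBall a (ε / 2)) := fun s hs ↦
    (hball hi (hsub hs)).1.differentiableWithinAt
  have hbound : ∀ s ∈ Metric.sphere a (ε / 2), ‖f i s‖ ≤ C := fun s hs ↦ by
    simpa using (hball hi (hsub (Metric.sphere_subset_closedBall hs))).2
  simpa using Complex.norm_iteratedDeriv_le_of_forall_mem_sphere_norm_le m (half_pos hε)
    (hdiff.diffContOnCl_ball subset_rfl) hbound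

section MulExp

variable {f g : ℂ → ℂ} {a : ℂ}

lemma deriv_mul_cexp (hf : DifferentiableAt ℂ f a) (hg : DifferentiableAt ℂ g a) :
    deriv (fun s ↦ f s * Complex.exp (g s)) a =
      (deriv f a + f a * deriv g a) * Complex.exp (g a) := by
  rw [(hf.hasDerivAt.fun_mul hg.hasDerivAt.cexp).deriv]
  ring

lemma iteratedDeriv_two_mul_cexp (hf : AnalyticAt ℂ f a) (hg : AnalyticAt ℂ g a) :
    iteratedDeriv 2 (fun s ↦ f s * Complex.exp (g s)) a =
      (iteratedDeriv 2 f a + 2 * deriv f a * deriv g a +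
        f a * (iteratedDeriv 2 g a + deriv g a ^ 2)) * Complex.exp (g a) := by
  have hderiv : deriv (fun s ↦ f s * Complex.exp (g s)) =ᶠ[𝓝 a]
      fun s ↦ (deriv f s + f s * deriv g s) * Complex.exp (g s) := by
    filter_upwards [hf.eventually_analyticAt, hg.eventually_analyticAt] with s hfs hgs
    exact deriv_mul_cexp hfs.differentiableAt hgs.differentiableAt
  have hfac : HasDerivAt (fun s ↦ deriv f s + f s * deriv g s) _ a :=
    hf.deriv.differentiableAt.hasDerivAt.fun_add
      (hf.differentiableAt.hasDerivAt.fun_mul hg.deriv.differentiableAt.hasDerivAt)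
  simp only [iteratedDeriv_succ, iteratedDeriv_zero]
  rw [hderiv.deriv_eq, deriv_mul_cexp hfac.differentiableAt hg.differentiableAt, hfac.deriv]
  ring

end MulExp

section Taylor

variable {u : ℂ → ℂ}

lemma isLittleO_sub_taylor_two {a : ℂ} (hu : AnalyticAt ℂ u a) :
    (fun y ↦ u (a + y) - (u a + deriv u a * y + iteratedDeriv 2 u a / 2 * y ^ 2))
      =o[𝓝 0] fun y ↦ y ^ 2 := by
  refine IsBigO.trans_isLittleO (g := fun y : ℂ ↦ y ^ 3) ?_ (isLittleO_pow_pow (by norm_num))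
  have hcubic := hu.hasFPowerSeriesAt.isBigO_sub_partialSum_pow 3
  simp only [← norm_pow, isBigO_norm_right] at hcubic
  refine hcubic.congr_left fun y ↦ ?_
  simp [FormalMultilinearSeries.partialSum, Finset.sum_range_succ, Nat.factorial]
  ring

variable {ι : Type*} {l : Filter ι} {β : ι → ℝ}

lemma tendsto_div_sqrt_zero (hβ : Tendsto β l atTop) (a : ℂ) :
    Tendsto (fun i ↦ a / (√(β i) : ℝ)) l (𝓝 0) := by
  rw [tendsto_zero_iff_norm_tendsto_zero]
  simp only [norm_div, Complex.norm_real, Real.norm_of_nonneg (Real.sqrt_nonneg _)]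
  exact tendsto_const_nhds.div_atTop (Real.tendsto_sqrt_atTop.comp hβ)

lemma tendsto_mul_sub_deriv_mul_div_sqrt (hβ : Tendsto β l atTop) (hu : AnalyticAt ℂ u 0)
    (hu0 : u 0 = 0) (a : ℂ) :
    Tendsto (fun i ↦ β i * (u (a / (√(β i) : ℝ)) - deriv u 0 * (a / (√(β i) : ℝ)))) l
      (𝓝 (iteratedDeriv 2 u 0 / 2 * a ^ 2)) := by
  set s : ι → ℂ := fun i ↦ a / (√(β i) : ℝ)
  have hscale : ∀ᶠ i in l, β i * s i ^ 2 = a ^ 2 := by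
    filter_upwards [hβ.eventually_gt_atTop 0] with i hi
    have hβi : (β i : ℂ) ≠ 0 := by exact_mod_cast hi.ne'
    rw [div_pow, ← Complex.ofReal_pow, Real.sq_sqrt hi.le, mul_div_cancel₀ _ hβi]
  have hrem : Tendsto (fun i ↦ β i *
      (u (s i) - (deriv u 0 * s i + iteratedDeriv 2 u 0 / 2 * s i ^ 2))) l (𝓝 0) := by
    have hlittle := (isLittleO_sub_taylor_two hu).comp_tendsto (tendsto_div_sqrt_zero hβ a)
    have hmul := (isBigO_refl (fun i ↦ (β i : ℂ)) l).mul_isLittleO hlittle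
    simp only [Function.comp_def, zero_add, hu0] at hmul
    exact (hmul.congr' .rfl hscale).tendsto_zero_of_tendsto tendsto_const_nhds
  rw [← zero_add (iteratedDeriv 2 u 0 / 2 * a ^ 2)]
  refine (hrem.add_const _).congr' (hscale.mono fun i hi ↦ ?_)
  rw [← hi]
  ring

end Taylor

section LogDivCompExp

variable {z : ℂ → ℂ}

lemma analyticAt_log_div_comp_cexp (hz : AnalyticAt ℂ z 1) (hz1 : z 1 ≠ 0) :
    AnalyticAt ℂ (fun s ↦ Complex.log (z 1 / z (Complex.exp s))) 0 := by
  have hze : AnalyticAt ℂ (fun s ↦ z (Complex.exp s)) 0 :=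
    AnalyticAt.fun_comp (by simpa using hz) analyticAt_cexp
  exact (analyticAt_const.div hze (by simpa using hz1)).clog (by simp [hz1])

lemma deriv_log_div_comp_cexp_eventuallyEq (hz : AnalyticAt ℂ z 1) (hz1 : z 1 ≠ 0) :
    deriv (fun s ↦ Complex.log (z 1 / z (Complex.exp s))) =ᶠ[𝓝 0]
      fun s ↦ -(Complex.exp s * logDeriv z (Complex.exp s)) := by
  have hexp : Tendsto Complex.exp (𝓝 0) (𝓝 1) := by
    simpa using Complex.continuous_exp.tendsto 0
  have hslit : ∀ᶠ x in 𝓝 1, z 1 / z x ∈ Complex.slitPlane :=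
    (continuousAt_const.div hz.continuousAt hz1).eventually
      (Complex.isOpen_slitPlane.mem_nhds (by simp [hz1]))
  filter_upwards [hexp.eventually hslit, hexp.eventually hz.eventually_analyticAt,
    hexp.eventually (hz.continuousAt.eventually_ne hz1)] with s hs hzs hne
  have hcomp : HasDerivAt (fun s ↦ z (Complex.exp s)) (deriv z (Complex.exp s) * Complex.exp s) s :=
    hzs.differentiableAt.hasDerivAt.comp s (Complex.hasDerivAt_exp s)
  rw [(((hasDerivAt_const s (z 1)).fun_div hcomp hne).clog hs).deriv, logDeriv_apply]
  field_simp
  ring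

lemma deriv_log_div_comp_cexp (hz : AnalyticAt ℂ z 1) (hz1 : z 1 ≠ 0) :
    deriv (fun s ↦ Complex.log (z 1 / z (Complex.exp s))) 0 = -deriv z 1 / z 1 := by
  simpa [logDeriv_apply, neg_div] using (deriv_log_div_comp_cexp_eventuallyEq hz hz1).eq_of_nhds

lemma iteratedDeriv_two_log_div_comp_cexp (hz : AnalyticAt ℂ z 1) (hz1 : z 1 ≠ 0) :
    iteratedDeriv 2 (fun s ↦ Complex.log (z 1 / z (Complex.exp s))) 0 =
      -deriv z 1 / z 1 + (-deriv z 1 / z 1) ^ 2 - deriv (deriv z) 1 / z 1 := by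
  have hlogDeriv : HasDerivAt (logDeriv z) _ 1 :=
    hz.deriv.differentiableAt.hasDerivAt.div hz.differentiableAt.hasDerivAt hz1
  have hinner : HasDerivAt (fun x ↦ -(x * logDeriv z x))
      (-(logDeriv z 1 + deriv (logDeriv z) 1)) (Complex.exp 0) := by
    rw [Complex.exp_zero]
    simpa using ((hasDerivAt_id 1).fun_mul hlogDeriv.differentiableAt.hasDerivAt).fun_neg
  simp only [iteratedDeriv_succ, iteratedDeriv_zero]
  rw [(deriv_log_div_comp_cexp_eventuallyEq hz hz1).deriv_eq]
  refine (hinner.comp 0 (Complex.hasDerivAt_exp 0)).deriv.trans ?_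
  rw [hlogDeriv.deriv, logDeriv_apply, Complex.exp_zero]
  field_simp
  ring

end LogDivCompExp

end Analytic

section SingleVariable

variable {Ω : Type*} [MeasurableSpace Ω] {P : Measure Ω} {X : Ω → ℝ}

lemma complexMGF_sub_div (a b : ℝ) (z : ℂ) :
    complexMGF (fun ω ↦ (X ω - a) / b) P z =
      Complex.exp (-(a * (z / b))) * complexMGF X P (z / b) := by
  simp only [complexMGF]
  rw [← integral_const_mul]
  congr 1 with ω
  rw [← Complex.exp_add]
  congr 1
  push_cast
  ring

lemma ofReal_integral_eq_deriv_complexMGF (hX : 0 ∈ interior (integrableExpSet X P)) :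
    ((P[X] : ℝ) : ℂ) = deriv (complexMGF X P) 0 := by
  rw [(hasDerivAt_complexMGF (by simpa using hX)).deriv, ← integral_complex_ofReal]
  simp

lemma ofReal_integral_sq_eq_iteratedDeriv_two_complexMGF
    (hX : 0 ∈ interior (integrableExpSet X P)) :
    ((P[X ^ 2] : ℝ) : ℂ) = iteratedDeriv 2 (complexMGF X P) 0 := by
  rw [iteratedDeriv_complexMGF (by simpa using hX) 2, ← integral_complex_ofReal]
  simp

/-- The factor `G` in `E[exp (s X)] = G s * exp (b * u s)`: what the Laplace transform of `X` keeps
after its exponential part has been divided out. -/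
noncomputable def reducedMGF (X : Ω → ℝ) (P : Measure Ω) (b : ℝ) (u : ℂ → ℂ) (s : ℂ) : ℂ :=
  complexMGF X P s * Complex.exp (-(b * u s))

variable {b : ℝ} {u : ℂ → ℂ}

lemma complexMGF_eq_reducedMGF_mul (b : ℝ) (u : ℂ → ℂ) :
    complexMGF X P = fun s ↦ reducedMGF X P b u s * Complex.exp (b * u s) := by
  ext s
  rw [reducedMGF, mul_assoc, ← Complex.exp_add, neg_add_cancel, Complex.exp_zero, mul_one]

lemma differentiableAt_reducedMGF {s : ℂ} (hs : s.re ∈ interior (integrableExpSet X P))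
    (hu : DifferentiableAt ℂ u s) : DifferentiableAt ℂ (reducedMGF X P b u) s :=
  (hasDerivAt_complexMGF hs).differentiableAt.mul (hu.const_mul _).neg.cexp

lemma analyticAt_reducedMGF {s : ℂ} (hs : s.re ∈ interior (integrableExpSet X P))
    (hu : AnalyticAt ℂ u s) : AnalyticAt ℂ (reducedMGF X P b u) s :=
  (analyticAt_complexMGF hs).mul (analyticAt_const.mul hu).neg.cexp'

variable [IsProbabilityMeasure P]

lemma reducedMGF_zero (hu0 : u 0 = 0) : reducedMGF X P b u 0 = 1 := by
  simp [reducedMGF, complexMGF, hu0]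

lemma ofReal_integral_eq_deriv_reducedMGF (hX : 0 ∈ interior (integrableExpSet X P))
    (hu : DifferentiableAt ℂ u 0) (hu0 : u 0 = 0) :
    ((P[X] : ℝ) : ℂ) = deriv (reducedMGF X P b u) 0 + b * deriv u 0 := by
  have hG : DifferentiableAt ℂ (reducedMGF X P b u) 0 :=
    differentiableAt_reducedMGF (by simpa using hX) hu
  rw [ofReal_integral_eq_deriv_complexMGF hX, complexMGF_eq_reducedMGF_mul b u,
    deriv_mul_cexp hG (hu.const_mul _), deriv_const_mul_field, reducedMGF_zero hu0, hu0]
  simp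

lemma ofReal_variance_eq_iteratedDeriv_reducedMGF (hX : 0 ∈ interior (integrableExpSet X P))
    (hu : AnalyticAt ℂ u 0) (hu0 : u 0 = 0) :
    ((Var[X; P] : ℝ) : ℂ) = iteratedDeriv 2 (reducedMGF X P b u) 0 -
      deriv (reducedMGF X P b u) 0 ^ 2 + b * iteratedDeriv 2 u 0 := by
  have hG : AnalyticAt ℂ (reducedMGF X P b u) 0 := analyticAt_reducedMGF (by simpa using hX) hu
  have hbu : AnalyticAt ℂ (fun s ↦ b * u s) 0 := analyticAt_const.mul hu
  have hsq := ofReal_integral_sq_eq_iteratedDeriv_two_complexMGF hX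
  rw [complexMGF_eq_reducedMGF_mul b u, iteratedDeriv_two_mul_cexp hG hbu, deriv_const_mul_field,
    iteratedDeriv_const_mul_field, reducedMGF_zero hu0, hu0, mul_zero, Complex.exp_zero] at hsq
  rw [variance_eq_sub (memLp_of_mem_interior_integrableExpSet hX 2), Complex.ofReal_sub,
    Complex.ofReal_pow, hsq,
    ofReal_integral_eq_deriv_reducedMGF (b := b) hX hu.differentiableAt hu0]
  ring

end SingleVariable

section Family

variable {ι : Type*} {l : Filter ι} {Ω : ι → Type*} [∀ i, MeasurableSpace (Ω i)]
  {P : ∀ i, Measure (Ω i)} {X : ∀ i, Ω i → ℝ} {β : ι → ℝ} {u : ℂ → ℂ}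

/-- Hwang's quasi-power asymptotics: `E[exp (s X i)] ∼ exp (β i * u s)` as `i → l` and `s → 0`
jointly, which encodes uniformity in a neighborhood of `0`. A continuous prefactor `c s` with
`c 0 = 1` need not be recorded, since it tends to `1` in this limit. -/
def HasQuasiPowers (X : ∀ i, Ω i → ℝ) (P : ∀ i, Measure (Ω i)) (l : Filter ι) (β : ι → ℝ)
    (u : ℂ → ℂ) : Prop :=
  (fun p : ι × ℂ ↦ complexMGF (X p.1) (P p.1) p.2) ~[l ×ˢ 𝓝 0]
    fun p ↦ Complex.exp (β p.1 * u p.2)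

namespace HasQuasiPowers

lemma tendsto_reducedMGF (h : HasQuasiPowers X P l β u) :
    Tendsto (fun p : ι × ℂ ↦ reducedMGF (X p.1) (P p.1) (β p.1) u p.2) (l ×ˢ 𝓝 0) (𝓝 1) := by
  have hquot := (isEquivalent_iff_tendsto_one (.of_forall fun _ ↦ Complex.exp_ne_zero _)).1 h
  exact hquot.congr fun p ↦ by simp [reducedMGF, Complex.exp_neg, div_eq_mul_inv]

lemma eventually_re_mem_interior_integrableExpSet (hX : ∀ i, AEMeasurable (X i) (P i))
    (h : HasQuasiPowers X P l β u) :
    ∀ᶠ p : ι × ℂ in l ×ˢ 𝓝 0, p.2.re ∈ interior (integrableExpSet (X p.1) (P p.1)) := by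
  have hne : ∀ᶠ p : ι × ℂ in l ×ˢ 𝓝 0, complexMGF (X p.1) (P p.1) p.2 ≠ 0 :=
    (h.tendsto_reducedMGF.eventually_ne one_ne_zero).mono fun _ hp ↦ left_ne_zero_of_mul hp
  obtain ⟨good, hgood, ε, hε, hball⟩ := Metric.eventually_prod_nhds_iff.1 hne
  refine Metric.eventually_prod_nhds_iff.2 ⟨good, hgood, ε, hε, fun {i} hi {s} hs ↦ ?_⟩
  -- Outside the domain of the Laplace transform, `complexMGF` takes the junk value `0`.
  have hsub : Metric.ball 0 ε ⊆ integrableExpSet (X i) (P i) := fun t ht ↦ by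
    by_contra hundef
    exact hball hi (x := (t : ℂ)) (by simpa using ht) (complexMGF_undef (hX i) hundef)
  refine interior_maximal hsub Metric.isOpen_ball ?_
  rw [dist_zero_right] at hs
  simpa using (Complex.abs_re_le_norm s).trans_lt hs

lemma eventually_zero_mem_interior_integrableExpSet (hX : ∀ i, AEMeasurable (X i) (P i))
    (h : HasQuasiPowers X P l β u) :
    ∀ᶠ i in l, 0 ∈ interior (integrableExpSet (X i) (P i)) :=
  (h.eventually_re_mem_interior_integrableExpSet hX).curry.mono fun _ hi ↦ hi.self_of_nhds

lemma isBigO_iteratedDeriv_reducedMGF (hX : ∀ i, AEMeasurable (X i) (P i))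
    (h : HasQuasiPowers X P l β u) (hu : AnalyticAt ℂ u 0) (m : ℕ) :
    (fun i ↦ iteratedDeriv m (reducedMGF (X i) (P i) (β i) u) 0) =O[l] (1 : ι → ℝ) := by
  refine isBigO_one_iteratedDeriv_of_isBigO_one ?_ (h.tendsto_reducedMGF.isBigO_one ℝ) m
  filter_upwards [h.eventually_re_mem_interior_integrableExpSet hX,
    hu.eventually_analyticAt.prod_inr l] with p hp hup
  exact differentiableAt_reducedMGF hp hup.differentiableAt

variable {μ σ2 : ℝ}

lemma tendsto_complexMGF_standardized (h : HasQuasiPowers X P l β u) (hβ : Tendsto β l atTop)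
    (hu : AnalyticAt ℂ u 0) (hu0 : u 0 = 0) (hμ : deriv u 0 = μ) (a : ℂ) :
    Tendsto (fun i ↦ complexMGF (fun ω ↦ (X i ω - μ * β i) / √(β i)) (P i) a) l
      (𝓝 (Complex.exp (iteratedDeriv 2 u 0 / 2 * a ^ 2))) := by
  have hG : Tendsto (fun i ↦ reducedMGF (X i) (P i) (β i) u (a / (√(β i) : ℝ))) l (𝓝 1) :=
    h.tendsto_reducedMGF.comp (tendsto_id.prodMk (tendsto_div_sqrt_zero hβ a))
  have hlim := hG.mul (tendsto_mul_sub_deriv_mul_div_sqrt hβ hu hu0 a).cexp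
  rw [one_mul] at hlim
  refine hlim.congr fun i ↦ ?_
  rw [complexMGF_sub_div, reducedMGF, hμ, mul_assoc, ← Complex.exp_add, mul_comm]
  congr 2
  push_cast
  ring

variable [∀ i, IsProbabilityMeasure (P i)]

lemma isBigO_integral_sub (hX : ∀ i, AEMeasurable (X i) (P i)) (h : HasQuasiPowers X P l β u)
    (hu : AnalyticAt ℂ u 0) (hu0 : u 0 = 0) (hμ : deriv u 0 = μ) :
    (fun i ↦ (P i)[X i] - μ * β i) =O[l] (1 : ι → ℝ) := by
  rw [← Complex.isBigO_ofReal_left]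
  refine (h.isBigO_iteratedDeriv_reducedMGF hX hu 1).congr' ?_ .rfl
  filter_upwards [h.eventually_zero_mem_interior_integrableExpSet hX] with i hi
  rw [iteratedDeriv_one, Complex.ofReal_sub,
    ofReal_integral_eq_deriv_reducedMGF (b := β i) hi hu.differentiableAt hu0, hμ]
  push_cast
  ring

lemma isBigO_variance_sub (hX : ∀ i, AEMeasurable (X i) (P i)) (h : HasQuasiPowers X P l β u)
    (hu : AnalyticAt ℂ u 0) (hu0 : u 0 = 0) (hσ : iteratedDeriv 2 u 0 = σ2) :
    (fun i ↦ Var[X i; P i] - σ2 * β i) =O[l] (1 : ι → ℝ) := by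
  have hG1 := h.isBigO_iteratedDeriv_reducedMGF hX hu 1
  have hG2 := h.isBigO_iteratedDeriv_reducedMGF hX hu 2
  rw [← Complex.isBigO_ofReal_left]
  have hG1sq := (hG1.pow 2).congr_right (g₂ := (1 : ι → ℝ)) fun _ ↦ one_pow 2
  refine (hG2.sub hG1sq).congr' ?_ .rfl
  filter_upwards [h.eventually_zero_mem_interior_integrableExpSet hX] with i hi
  rw [iteratedDeriv_one, Complex.ofReal_sub,
    ofReal_variance_eq_iteratedDeriv_reducedMGF (b := β i) hi hu hu0, hσ]
  push_cast
  ring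

lemma variance_coeff_nonneg [l.NeBot] (hX : ∀ i, AEMeasurable (X i) (P i))
    (h : HasQuasiPowers X P l β u) (hβ : Tendsto β l atTop) (hu : AnalyticAt ℂ u 0)
    (hu0 : u 0 = 0) (hσ : iteratedDeriv 2 u 0 = σ2) : 0 ≤ σ2 := by
  have hlittle : (fun i ↦ Var[X i; P i] - σ2 * β i) =o[l] β :=
    (h.isBigO_variance_sub hX hu hu0 hσ).trans_isLittleO
      (isLittleO_const_left.2 (.inr (tendsto_norm_atTop_atTop.comp hβ)))
  have hlim := hlittle.tendsto_div_nhds_zero.add_const σ2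
  rw [zero_add] at hlim
  refine ge_of_tendsto hlim ((hβ.eventually_gt_atTop 0).mono fun i hi ↦ ?_)
  rw [sub_div, mul_div_cancel_right₀ _ hi.ne', sub_add_cancel]
  exact div_nonneg (variance_nonneg _ _) hi.le

theorem tendstoInDistribution [l.IsCountablyGenerated] (hX : ∀ i, AEMeasurable (X i) (P i))
    (h : HasQuasiPowers X P l β u) (hβ : Tendsto β l atTop) (hu : AnalyticAt ℂ u 0)
    (hu0 : u 0 = 0) (hμ : deriv u 0 = μ) {v : NNReal} (hσ : iteratedDeriv 2 u 0 = (v : ℝ)) :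
    TendstoInDistribution (fun i ω ↦ (X i ω - μ * β i) / √(β i)) l id P (gaussianReal 0 v) where
  forall_aemeasurable i := by fun_prop
  tendsto := by
    refine tendsto_of_seq_tendsto fun n hn ↦
      ProbabilityMeasure.tendsto_of_tendsto_charFun fun t ↦ ?_
    have hlim := (h.tendsto_complexMGF_standardized hβ hu hu0 hμ (t * Complex.I)).comp hn
    have hgauss : charFun (gaussianReal 0 v) t =
        Complex.exp (iteratedDeriv 2 u 0 / 2 * (t * Complex.I) ^ 2) := by
      rw [charFun_gaussianReal, hσ, mul_pow, Complex.I_sq]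
      congr 1
      push_cast
      ring
    simp only [ProbabilityMeasure.coe_mk, Measure.map_id]
    rw [hgauss]
    refine hlim.congr fun k ↦ ?_
    exact complexMGF_mul_I (by fun_prop) t

end HasQuasiPowers

lemma tendsto_integral_of_tendstoInDistribution {E Ω' : Type*} [TopologicalSpace E]
    [MeasurableSpace E] [OpensMeasurableSpace E] [MeasurableSpace Ω'] {Q : Measure Ω'}
    [IsProbabilityMeasure Q] [∀ i, IsProbabilityMeasure (P i)] {Y : ∀ i, Ω i → E} {Z : Ω' → E}
    (h : TendstoInDistribution Y l Z P Q) (f : BoundedContinuousFunction E ℝ) :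
    Tendsto (fun i ↦ ∫ ω, f (Y i ω) ∂P i) l (𝓝 (∫ ω, f (Z ω) ∂Q)) := by
  have hlim := ProbabilityMeasure.tendsto_iff_forall_integral_tendsto.1 h.tendsto f
  simp only [ProbabilityMeasure.coe_mk] at hlim
  rw [integral_map h.aemeasurable_limit f.continuous.aestronglyMeasurable] at hlim
  refine hlim.congr fun i ↦ ?_
  exact integral_map (h.forall_aemeasurable i) f.continuous.aestronglyMeasurable

lemma hasQuasiPowers_of_isEquivalent_pgf [l.NeBot] [∀ i, IsProbabilityMeasure (P i)] {c B : ℂ → ℂ}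
    (hc : ContinuousAt c 1) (hB : ContinuousAt B 1) (hB1 : B 1 = 1)
    (hpgf : (fun p : ι × ℂ ↦ ∫ ω, p.2 ^ (X p.1 ω : ℂ) ∂P p.1) ~[l ×ˢ 𝓝 1]
      fun p ↦ c p.2 * B p.2 ^ (β p.1 : ℂ)) :
    HasQuasiPowers X P l β fun s ↦ Complex.log (B (Complex.exp s)) := by
  have hexp : Tendsto Complex.exp (𝓝 0) (𝓝 1) := by
    simpa using Complex.continuous_exp.tendsto 0
  have hc1 : c 1 = 1 := by
    have hone := (hpgf.comp_tendsto (tendsto_id.prodMk tendsto_const_nhds)).isLittleO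
    have hconst : (fun _ ↦ 1 - c 1) =o[l] fun _ ↦ c 1 := by
      simpa [Function.comp_def, hB1, Pi.sub_def] using hone
    exact (sub_eq_zero.1 (isLittleO_const_const_iff.1 hconst)).symm
  have hprefactor : (fun p : ι × ℂ ↦ c (Complex.exp p.2)) ~[l ×ˢ 𝓝 0] fun _ ↦ 1 := by
    refine (isEquivalent_const_iff_tendsto one_ne_zero).2 ?_
    rw [← hc1]
    exact (hc.tendsto.comp hexp).comp tendsto_snd
  have him : ∀ᶠ s : ℂ in 𝓝 0, |s.im| < Real.pi :=
    (Complex.continuous_im.abs.tendsto 0).eventually_lt_const (by simpa using Real.pi_pos)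
  have hBne : ∀ᶠ s in 𝓝 0, B (Complex.exp s) ≠ 0 :=
    hexp.eventually (hB.eventually_ne (by simp [hB1]))
  have hlaplace := hpgf.comp_tendsto (tendsto_id.prodMap hexp)
  refine ((hlaplace.congr_left ?_).trans (hprefactor.mul .refl)).congr_right ?_
  · filter_upwards [him.prod_inr l] with p hp
    simp [complexMGF, Complex.cpow_def_of_ne_zero (Complex.exp_ne_zero _),
      Complex.log_exp (abs_lt.1 hp).1 (abs_lt.1 hp).2.le]
  · filter_upwards [hBne.prod_inr l] with p hp
    simp [Complex.cpow_def_of_ne_zero hp, mul_comm]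

end Family

lemma isEquivalent_of_eq_mul_one_add {α 𝕜 : Type*} [PseudoMetricSpace α] [NormedField 𝕜] {a : α}
    {δ : ℝ} (hδ : 0 < δ) {U V err : ℕ → α → 𝕜}
    (herr : ∀ e > (0 : ℝ), ∃ N : ℕ, ∀ n ≥ N, ∀ x ∈ Metric.ball a δ, ‖err n x‖ ≤ e)
    (hUV : ∀ n, ∀ x ∈ Metric.ball a δ, U n x = V n x * (1 + err n x)) :
    (fun p : ℕ × α ↦ U p.1 p.2) ~[atTop ×ˢ 𝓝 a] fun p ↦ V p.1 p.2 := by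
  have hball : ∀ᶠ p : ℕ × α in atTop ×ˢ 𝓝 a, p.2 ∈ Metric.ball a δ :=
    Eventually.prod_inr (Metric.ball_mem_nhds a hδ) atTop
  have herr0 : Tendsto (fun p : ℕ × α ↦ err p.1 p.2) (atTop ×ˢ 𝓝 a) (𝓝 0) := by
    refine NormedAddGroup.tendsto_nhds_zero.2 fun e he ↦ ?_
    obtain ⟨N, hN⟩ := herr (e / 2) (half_pos he)
    filter_upwards [(eventually_ge_atTop N).prod_inl (𝓝 a), hball] with p hp hpa
    exact (hN p.1 hp p.2 hpa).trans_lt (half_lt_self he)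
  refine isEquivalent_iff_exists_eq_mul.2 ⟨fun p ↦ 1 + err p.1 p.2, ?_, ?_⟩
  · simpa using herr0.const_add 1
  · filter_upwards [hball] with p hp
    rw [hUV p.1 p.2 hp, Pi.mul_apply, mul_comm]

theorem quasi_power_clt_general {ι : Type*} {l : Filter ι} [l.NeBot] [l.IsCountablyGenerated]
    {Ω : ι → Type*} [∀ i, MeasurableSpace (Ω i)] (P : ∀ i, Measure (Ω i))
    [∀ i, IsProbabilityMeasure (P i)] (X : ∀ i, Ω i → ℝ) (hX : ∀ i, AEMeasurable (X i) (P i))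
    {β : ι → ℝ} (hβ : Tendsto β l atTop) {c z₀ : ℂ → ℂ} (hc : ContinuousAt c 1)
    (hz₀ : AnalyticAt ℂ z₀ 1) (hz₀ne : z₀ 1 ≠ 0)
    (hpgf : (fun p : ι × ℂ ↦ ∫ ω, p.2 ^ (X p.1 ω : ℂ) ∂P p.1) ~[l ×ˢ 𝓝 1]
      fun p ↦ c p.2 * (z₀ 1 / z₀ p.2) ^ (β p.1 : ℂ))
    {μ σ2 : ℝ} (hμ : (μ : ℂ) = -deriv z₀ 1 / z₀ 1)
    (hσ : (σ2 : ℂ) = (μ : ℂ) + (μ : ℂ) ^ 2 - deriv (deriv z₀) 1 / z₀ 1) :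
    0 ≤ σ2 ∧
      TendstoInDistribution (fun i ω ↦ (X i ω - μ * β i) / √(β i)) l id P
        (gaussianReal 0 σ2.toNNReal) ∧
      (fun i ↦ (P i)[X i] - μ * β i) =O[l] (1 : ι → ℝ) ∧
      (fun i ↦ Var[X i; P i] - σ2 * β i) =O[l] (1 : ι → ℝ) := by
  set u : ℂ → ℂ := fun s ↦ Complex.log (z₀ 1 / z₀ (Complex.exp s))
  have hu : AnalyticAt ℂ u 0 := analyticAt_log_div_comp_cexp hz₀ hz₀ne
  have hu0 : u 0 = 0 := by simp [u, hz₀ne]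
  have hu1 : deriv u 0 = μ := (deriv_log_div_comp_cexp hz₀ hz₀ne).trans hμ.symm
  have hu2 : iteratedDeriv 2 u 0 = σ2 := by
    rw [hσ, hμ, iteratedDeriv_two_log_div_comp_cexp hz₀ hz₀ne]
  have hquasi : HasQuasiPowers X P l β u :=
    hasQuasiPowers_of_isEquivalent_pgf (B := fun x ↦ z₀ 1 / z₀ x) hc
      (continuousAt_const.div hz₀.continuousAt hz₀ne) (div_self hz₀ne) hpgf
  have hσ2 : 0 ≤ σ2 := hquasi.variance_coeff_nonneg hX hβ hu hu0 hu2
  exact ⟨hσ2,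
    hquasi.tendstoInDistribution hX hβ hu hu0 hu1 (by rw [hu2, Real.coe_toNNReal _ hσ2]),
    hquasi.isBigO_integral_sub hX hu hu0 hu1, hquasi.isBigO_variance_sub hX hu hu0 hu2⟩

/-- Hwang's quasi-power theorem in the form used in the paper: if the probability
generating functions satisfy `E[x^{X_n}] = c(x)·(z₀(1)/z₀(x))^n·(1 + o(1))`
uniformly for `x` in a complex neighborhood of `1`, with `c, z₀` analytic and
nonzero near `1` and `z₀'(1) ≠ 0`, then `(X_n − μn)/√n → N(0,σ²)` in
distribution with `μ = −z₀'(1)/z₀(1)`, `σ² = μ + μ² − z₀''(1)/z₀(1)`, and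
`E X_n = μn + O(1)`, `Var X_n = σ²n + O(1)`. -/
theorem quasi_power_clt {Ω : Type*} [MeasurableSpace Ω]
    (P : Measure Ω) [IsProbabilityMeasure P]
    (X : ℕ → Ω → ℕ) (hX : ∀ n, Measurable (X n))
    (c z₀ : ℂ → ℂ)
    (hc : AnalyticAt ℂ c 1) (hz₀ : AnalyticAt ℂ z₀ 1)
    (hcne : c 1 ≠ 0) (hz₀ne : z₀ 1 ≠ 0) (hz₀' : deriv z₀ 1 ≠ 0)
    (δ : ℝ) (hδ : 0 < δ)
    (hz₀ball : ∀ x ∈ Metric.ball (1 : ℂ) δ, z₀ x ≠ 0)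
    (err : ℕ → ℂ → ℂ)
    (herr : ∀ e > (0 : ℝ), ∃ N : ℕ, ∀ n ≥ N, ∀ x ∈ Metric.ball (1 : ℂ) δ,
      ‖err n x‖ ≤ e)
    (hpgf : ∀ n : ℕ, ∀ x ∈ Metric.ball (1 : ℂ) δ,
      (∫ ω, x ^ (X n ω) ∂P) = c x * (z₀ 1 / z₀ x) ^ n * (1 + err n x))
    (μ σ2 : ℝ) (hσ2 : 0 ≤ σ2)
    (hμ : (μ : ℂ) = -deriv z₀ 1 / z₀ 1)
    (hσ : (σ2 : ℂ) = (μ : ℂ) + (μ : ℂ) ^ 2 - deriv (deriv z₀) 1 / z₀ 1) :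
    (∀ f : BoundedContinuousFunction ℝ ℝ,
      Filter.Tendsto
        (fun n : ℕ => ∫ ω, f (((X n ω : ℝ) - μ * n) / Real.sqrt n) ∂P)
        Filter.atTop
        (𝓝 (∫ y, f y ∂(gaussianReal 0 ⟨σ2, hσ2⟩))))
    ∧ (fun n : ℕ => (∫ ω, (X n ω : ℝ) ∂P) - μ * n) =O[Filter.atTop]
        (fun _ : ℕ => (1 : ℝ))
    ∧ (fun n : ℕ =>
        (∫ ω, ((X n ω : ℝ) - ∫ ω', (X n ω' : ℝ) ∂P) ^ 2 ∂P) - σ2 * n)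
        =O[Filter.atTop] (fun _ : ℕ => (1 : ℝ)) := by
  have hXreal : ∀ n, Measurable fun ω ↦ (X n ω : ℝ) := fun n ↦ by fun_prop
  have hequiv : (fun p : ℕ × ℂ ↦ ∫ ω, p.2 ^ (((X p.1 ω : ℕ) : ℝ) : ℂ) ∂P) ~[atTop ×ˢ 𝓝 1]
      fun p ↦ c p.2 * (z₀ 1 / z₀ p.2) ^ (((p.1 : ℕ) : ℝ) : ℂ) := by
    simpa only [Complex.ofReal_natCast, Complex.cpow_natCast] using
      isEquivalent_of_eq_mul_one_add hδ herr hpgf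
  obtain ⟨-, hclt, hmean, hvar⟩ := quasi_power_clt_general (fun _ ↦ P) (fun n ω ↦ (X n ω : ℝ))
    (fun n ↦ (hXreal n).aemeasurable) tendsto_natCast_atTop_atTop hc.continuousAt hz₀ hz₀ne
    hequiv hμ hσ
  rw [Real.toNNReal_of_nonneg hσ2] at hclt
  simp only [variance_eq_integral (hXreal _).aemeasurable] at hvar
  exact ⟨fun f ↦ tendsto_integral_of_tendstoInDistribution hclt f, hmean, hvar⟩
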